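/- Let Y be a real Banach space and let A : ℓ¹ → Y be a bounded linear operator that is weak*-to-weak sequentially continuous. Fix y^δ ∈ Y, α > 0, and p > 1, and consider the Tikhonov functional T(x) = ‖A x − y^δ‖_Y^p + α·‖x‖_{ℓ¹} on ℓ¹. Then: (i) T attains its minimum, i.e., there exists x* ∈ ℓ¹ with T(x*) ≤ T(x) for all x ∈ ℓ¹; (ii) every minimizer of T is sparse, i.e., has only finitely many nonzero components; (iii) if the equation A x = y has at least one solution x ∈ ℓ¹ for a given y ∈ Y, then there exists a norm-minimizing solution: a solution x† with ‖x†‖_{ℓ¹} ≤ ‖x‖_{ℓ¹} for every solution x of A x = y. -/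

import Mathlib

open Filter

/-- A sequence in `ℓ¹` converges weak* (w.r.t. the predual `c₀`) to `x₀` if all dual pairings
with null sequences converge. -/
def WeakStarConvLp1 (x : ℕ → lp (fun _ : ℕ => ℝ) 1) (x₀ : lp (fun _ : ℕ => ℝ) 1) : Prop :=
  ∀ c : ℕ → ℝ, Tendsto c atTop (nhds 0) →
    Tendsto (fun n => ∑' k, c k * x n k) atTop (nhds (∑' k, c k * x₀ k))

/-- A bounded linear operator `A : ℓ¹ → Y` is weak*-to-weak sequentially continuous if it maps
weak*-convergent sequences to weakly convergent sequences. -/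
def WeakStarToWeakSeqContinuous {Y : Type*} [NormedAddCommGroup Y] [NormedSpace ℝ Y]
    (A : lp (fun _ : ℕ => ℝ) 1 →L[ℝ] Y) : Prop :=
  ∀ (x : ℕ → lp (fun _ : ℕ => ℝ) 1) (x₀ : lp (fun _ : ℕ => ℝ) 1), WeakStarConvLp1 x x₀ →
    ∀ f : Y →L[ℝ] ℝ, Tendsto (fun n => f (A (x n))) atTop (nhds (f (A x₀)))

/-!
Existence is the direct method. Balls of `ℓ¹` are weak* sequentially compact, by Tychonoff, because
on them weak* convergence is coordinatewise convergence; and the objectives are weak* sequentially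
lower semicontinuous, for the fidelity because a closed convex sublevel set is an intersection of
half-spaces.

For sparsity, separating the strict hypograph of `min - Φ` from the image under `A` of the epigraph
of `α‖·‖` shows that at a minimizer of `Φ (A x) + α‖x‖` the convex fidelity `Φ` may be replaced by a
continuous linear functional `ξ`. Since the unit vectors `e k` are weak* null, `ξ (A (e k)) → 0`; as
soon as `|ξ (A (e k))| < α`, deleting the `k`-th coordinate strictly decreases the objective unless
that coordinate is already zero.
-/

open Set Topology

local notation "ℓ¹" => lp (fun _ : ℕ => ℝ) 1

section WeakStarConvergence

variable {c : ℕ → ℝ} {x : ℕ → ℓ¹} {x₀ : ℓ¹} {C : ℝ}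

lemma abs_tsum_mul_sub_sum_range_le {N : ℕ} {ε : ℝ} (hc : ∀ k ≥ N, |c k| ≤ ε) (x : ℓ¹) :
    |∑' k, c k * x k - ∑ k ∈ Finset.range N, c k * x k| ≤ ε * ‖x‖ := by
  have hε : 0 ≤ ε := (abs_nonneg _).trans (hc N le_rfl)
  have hx : HasSum (fun k => |x k|) ‖x‖ := by
    simpa using lp.hasSum_norm (p := 1) (by simp) x
  have hxN : Summable fun k => |x (k + N)| := (summable_nat_add_iff N).2 hx.summable
  have tail_le (k : ℕ) : ‖c (k + N) * x (k + N)‖ ≤ ε * |x (k + N)| := by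
    rw [norm_mul]
    exact mul_le_mul_of_nonneg_right (hc _ (Nat.le_add_left N k)) (abs_nonneg _)
  have hcx : Summable fun k => c k * x k :=
    (summable_nat_add_iff N).1 (.of_norm_bounded (hxN.mul_left ε) tail_le)
  rw [← hcx.sum_add_tsum_nat_add N, add_sub_cancel_left]
  calc |∑' k, c (k + N) * x (k + N)|
      ≤ ε * ∑' k, |x (k + N)| := tsum_of_norm_bounded (hxN.hasSum.mul_left ε) tail_le
    _ ≤ ε * ∑' k, |x k| := by
        exact mul_le_mul_of_nonneg_left (tsum_comp_le_tsum_of_inj hx.summable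
          (fun _ => abs_nonneg _) (add_left_injective N)) hε
    _ = ε * ‖x‖ := by rw [hx.tsum_eq]

lemma tendstoUniformlyOn_sum_range_mul (hc : Tendsto c atTop (𝓝 0)) (C : ℝ) :
    TendstoUniformlyOn (fun N (x : ℓ¹) => ∑ k ∈ Finset.range N, c k * x k)
      (fun x => ∑' k, c k * x k) atTop (Metric.closedBall 0 C) := by
  rw [Metric.tendstoUniformlyOn_iff]
  intro ε hε
  obtain ⟨η, hη, hCη⟩ := exists_pos_mul_lt hε C
  obtain ⟨M, hM⟩ := Metric.tendsto_atTop.1 hc η hη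
  filter_upwards [eventually_ge_atTop M] with N hN x hx
  have c_le (k : ℕ) (hk : k ≥ N) : |c k| ≤ η := by
    simpa using (hM k (hN.trans hk)).le
  calc |∑' k, c k * x k - ∑ k ∈ Finset.range N, c k * x k|
      ≤ η * ‖x‖ := abs_tsum_mul_sub_sum_range_le c_le x
    _ ≤ C * η := by
        rw [mul_comm]
        gcongr
        exact mem_closedBall_zero_iff.1 hx
    _ < ε := hCη

lemma weakStarConvLp1_of_tendsto_apply (hC : ∀ n, ‖x n‖ ≤ C)
    (hx : ∀ k, Tendsto (fun n => x n k) atTop (𝓝 (x₀ k))) : WeakStarConvLp1 x x₀ := by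
  intro c hc
  have partial_sums_uniform : TendstoUniformly
      (fun N n => ∑ k ∈ Finset.range N, c k * x n k) (fun n => ∑' k, c k * x n k) atTop := by
    rw [← tendstoUniformlyOn_univ]
    exact ((tendstoUniformlyOn_sum_range_mul hc C).comp x).mono fun n _ =>
      mem_closedBall_zero_iff.2 (hC n)
  have partial_sums_tendsto (N : ℕ) : Tendsto (fun n => ∑ k ∈ Finset.range N, c k * x n k) atTop
      (𝓝 (∑ k ∈ Finset.range N, c k * x₀ k)) :=
    tendsto_finsetSum _ fun k _ => (hx k).const_mul (c k)
  have limit_partial_sums :=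
    (tendstoUniformlyOn_sum_range_mul hc ‖x₀‖).tendsto_at (mem_closedBall_zero_iff.2 le_rfl)
  exact partial_sums_uniform.tendsto_of_eventually_tendsto (.of_forall partial_sums_tendsto)
    limit_partial_sums

lemma WeakStarConvLp1.tendsto_apply (h : WeakStarConvLp1 x x₀) (k : ℕ) :
    Tendsto (fun n => x n k) atTop (𝓝 (x₀ k)) := by
  have single_null : Tendsto (Pi.single k 1 : ℕ → ℝ) atTop (𝓝 0) :=
    tendsto_const_nhds.congr' <| (eventually_gt_atTop k).mono fun j hj => by simp [hj.ne']
  have pairing (z : ℓ¹) : ∑' j, (Pi.single k 1 : ℕ → ℝ) j * z j = z k := by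
    rw [tsum_eq_single k fun j hj => by simp [hj], Pi.single_eq_same, one_mul]
  simpa only [pairing] using h _ single_null

lemma exists_subseq_weakStarConvLp1 (hC : ∀ n, ‖x n‖ ≤ C) :
    ∃ (x₀ : ℓ¹) (φ : ℕ → ℕ), StrictMono φ ∧ WeakStarConvLp1 (x ∘ φ) x₀ := by
  have box_compact : IsCompact (univ.pi fun _ : ℕ => Metric.closedBall (0 : ℝ) C) :=
    isCompact_univ_pi fun _ => isCompact_closedBall 0 C
  obtain ⟨u, -, φ, hφ, hu⟩ := box_compact.tendsto_subseq (x := fun n => ⇑(x n)) fun n k _ =>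
    mem_closedBall_zero_iff.2 ((lp.norm_apply_le_norm one_ne_zero (x n) k).trans (hC n))
  have bounded : Bornology.IsBounded (range (x ∘ φ)) :=
    isBounded_iff_forall_norm_le.2 ⟨C, forall_mem_range.2 fun n => hC (φ n)⟩
  exact ⟨⟨u, lp.memℓp_of_tendsto bounded hu⟩, φ, hφ,
    weakStarConvLp1_of_tendsto_apply (fun n => hC (φ n)) (tendsto_pi_nhds.1 hu)⟩

lemma weakStarConvLp1_single : WeakStarConvLp1 (fun n => lp.single 1 n (1 : ℝ)) 0 := by
  intro c hc
  have pairing (n : ℕ) : ∑' k, c k * (lp.single 1 n (1 : ℝ) : ℓ¹) k = c n := by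
    rw [tsum_eq_single n fun k hk => by rw [lp.single_apply_ne _ _ _ hk, mul_zero],
      lp.single_apply_self, mul_one]
  simpa only [pairing, lp.coeFn_zero, Pi.zero_apply, mul_zero, tsum_zero] using hc

end WeakStarConvergence

section DirectMethod

/-- Weak* sequential lower semicontinuity of a real-valued function on `ℓ¹`, in the form used by
Mathlib's `LowerSemicontinuous`: every strict lower bound of the value at a weak* limit is
eventually a strict lower bound along the sequence. -/
def WeakStarSeqLowerSemicontinuous (F : ℓ¹ → ℝ) : Prop :=
  ∀ ⦃x : ℕ → ℓ¹⦄ ⦃x₀ : ℓ¹⦄, WeakStarConvLp1 x x₀ → ∀ r < F x₀, ∀ᶠ n in atTop, r < F (x n)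

/-- Weak* sequential closedness of a subset of `ℓ¹`, the condition on the constraint set in the
direct method. -/
def IsWeakStarSeqClosed (S : Set ℓ¹) : Prop :=
  ∀ ⦃x : ℕ → ℓ¹⦄ ⦃x₀ : ℓ¹⦄, WeakStarConvLp1 x x₀ → (∀ n, x n ∈ S) → x₀ ∈ S

variable {F G : ℓ¹ → ℝ} {S : Set ℓ¹} {a : ℝ}

lemma WeakStarSeqLowerSemicontinuous.add (hF : WeakStarSeqLowerSemicontinuous F)
    (hG : WeakStarSeqLowerSemicontinuous G) :
    WeakStarSeqLowerSemicontinuous fun x => F x + G x := by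
  intro x x₀ hx r hr
  obtain ⟨s, hs, hsF⟩ := exists_between (sub_lt_iff_lt_add.2 hr)
  filter_upwards [hF hx s hsF, hG hx (r - s) (sub_lt_comm.1 hs)] with n hFn hGn
  linarith

lemma WeakStarSeqLowerSemicontinuous.const_mul (hF : WeakStarSeqLowerSemicontinuous F)
    (ha : 0 < a) : WeakStarSeqLowerSemicontinuous fun x => a * F x := by
  intro x x₀ hx r hr
  filter_upwards [hF hx (r / a) ((div_lt_iff₀' ha).2 hr)] with n hn
  exact (div_lt_iff₀' ha).1 hn

lemma weakStarSeqLowerSemicontinuous_norm :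
    WeakStarSeqLowerSemicontinuous fun x => ‖x‖ := by
  intro x x₀ hx r hr
  by_contra h
  have norm_le_frequently : ∃ᶠ n in atTop, ‖x n‖ ≤ r := by
    simpa only [not_eventually, not_lt] using h
  obtain ⟨φ, hφ, hle⟩ := extraction_of_frequently_atTop norm_le_frequently
  have subseq_tendsto : Tendsto (fun n => ⇑(x (φ n))) atTop (𝓝 ⇑x₀) :=
    (tendsto_pi_nhds.2 hx.tendsto_apply).comp hφ.tendsto_atTop
  exact hr.not_ge (lp.norm_le_of_tendsto (.of_forall hle) subseq_tendsto)

lemma isWeakStarSeqClosed_univ : IsWeakStarSeqClosed univ := fun _ _ _ _ => mem_univ _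

lemma IsWeakStarSeqClosed.exists_isMinOn (hS : IsWeakStarSeqClosed S) (hne : S.Nonempty)
    (hF : WeakStarSeqLowerSemicontinuous F) (hbdd : BddBelow (F '' S))
    (hcoercive : ∀ r, Bornology.IsBounded {x ∈ S | F x ≤ r}) : ∃ x ∈ S, IsMinOn F S x := by
  obtain ⟨t, t_anti, t_tendsto, ht⟩ := exists_seq_tendsto_sInf (hne.image F) hbdd
  choose x hxS hxt using ht
  obtain ⟨C, hC⟩ := (hcoercive (t 0)).exists_norm_le
  have x_bounded (n : ℕ) : ‖x n‖ ≤ C := hC _ ⟨hxS n, (hxt n).trans_le (t_anti n.zero_le)⟩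
  obtain ⟨x₀, φ, hφ, hx₀⟩ := exists_subseq_weakStarConvLp1 x_bounded
  have F_tendsto : Tendsto (fun n => F ((x ∘ φ) n)) atTop (𝓝 (sInf (F '' S))) := by
    simpa only [Function.comp_def, hxt] using t_tendsto.comp hφ.tendsto_atTop
  have F_le : F x₀ ≤ sInf (F '' S) := le_of_forall_lt_imp_le_of_dense fun r hr =>
    ge_of_tendsto F_tendsto ((hF hx₀ r hr).mono fun _ => le_of_lt)
  exact ⟨x₀, hS hx₀ fun n => hxS (φ n),
    fun z hz => F_le.trans (csInf_le hbdd (mem_image_of_mem F hz))⟩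

end DirectMethod

section FermatRule

variable {E Y : Type*} [AddCommGroup E] [Module ℝ E] [TopologicalSpace Y] [AddCommGroup Y]
  [IsTopologicalAddGroup Y] [Module ℝ Y] [ContinuousSMul ℝ Y] {Φ : Y → ℝ} {R : E → ℝ} {x₀ : E}

lemma exists_dual_isMinOn_comp_add (A : E →ₗ[ℝ] Y) (hΦ : ConvexOn ℝ univ Φ)
    (hΦc : Continuous Φ) (hR : ConvexOn ℝ univ R)
    (hmin : IsMinOn (fun x => Φ (A x) + R x) univ x₀) :
    ∃ ξ : Y →L[ℝ] ℝ, IsMinOn (fun x => ξ (A x) + R x) univ x₀ := by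
  let U : Set (Y × ℝ) := {q | Φ q.1 + q.2 < Φ (A x₀) + R x₀}
  let D : Set (Y × ℝ) := A.prodMap .id '' {q | R q.1 ≤ q.2}
  have U_convex : Convex ℝ U := by
    simpa [U] using ((hΦ.comp_linearMap (.fst ℝ Y ℝ)).add
      ((LinearMap.snd ℝ Y ℝ).convexOn convex_univ)).convex_lt (Φ (A x₀) + R x₀)
  have U_open : IsOpen U := isOpen_lt (by fun_prop) continuous_const
  have D_convex : Convex ℝ D := by
    simpa [D] using hR.convex_epigraph.linear_image (A.prodMap .id)
  have disjoint : Disjoint U D := by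
    rw [disjoint_left]
    rintro _ hU ⟨⟨x, s⟩, hxs : R x ≤ s, rfl⟩
    have hU' : Φ (A x) + s < Φ (A x₀) + R x₀ := hU
    have := isMinOn_univ_iff.1 hmin x
    linarith
  obtain ⟨f, u, hfU, hfD⟩ := geometric_hahn_banach_open U_convex U_open D_convex disjoint
  let ξ : Y →L[ℝ] ℝ := f.comp (.inl ℝ Y ℝ)
  let τ : ℝ := f (0, 1)
  have f_apply (y : Y) (s : ℝ) : f (y, s) = ξ y + s * τ := by
    calc f (y, s) = f ((y, 0) + s • (0, 1)) := by simp
      _ = ξ y + s * τ := by rw [map_add, map_smul]; rfl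
  have below (ε : ℝ) (hε : 0 < ε) : ξ (A x₀) + (R x₀ - ε) * τ < u := by
    rw [← f_apply]
    exact hfU _ (by simp [U, hε])
  have above (x : E) : u ≤ ξ (A x) + R x * τ := by
    rw [← f_apply]
    exact hfD _ ⟨(x, R x), le_refl (R x), rfl⟩
  have τ_pos : 0 < τ := by linarith [below 1 one_pos, above x₀]
  refine ⟨τ⁻¹ • ξ, isMinOn_univ_iff.2 fun x => le_of_forall_pos_lt_add fun ε hε => ?_⟩
  have key : ξ (A x₀) + (R x₀ - ε) * τ < ξ (A x) + R x * τ := (below ε hε).trans_le (above x)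
  simp only [smul_apply, smul_eq_mul]
  field_simp
  linarith

end FermatRule

section Sparsity

variable {ι : Type*} [DecidableEq ι] {α : ℝ} {g : lp (fun _ : ι => ℝ) 1 →ₗ[ℝ] ℝ}
  {x : lp (fun _ : ι => ℝ) 1}

lemma apply_eq_zero_of_isMinOn_add_mul_norm
    (hmin : IsMinOn (fun z => g z + α * ‖z‖) univ x) {k : ι}
    (hk : |g (lp.single 1 k 1)| < α) : x k = 0 := by
  have norm_delete : ‖x - lp.single 1 k (x k)‖ = ‖x‖ - |x k| := by
    simpa using lp.norm_compl_sum_single (p := 1) (by simp) x {k}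
  have g_single : g (lp.single 1 k (x k)) = x k * g (lp.single 1 k 1) := by
    rw [← smul_eq_mul, ← map_smul, ← lp.single_smul, smul_eq_mul, mul_one]
  have delete_le : α * |x k| ≤ |g (lp.single 1 k 1)| * |x k| := by
    have h := isMinOn_univ_iff.1 hmin (x - lp.single 1 k (x k))
    rw [map_sub, norm_delete, g_single] at h
    have := neg_le_abs (x k * g (lp.single 1 k 1))
    rw [abs_mul] at this
    linarith
  by_contra hxk
  exact hk.not_ge (le_of_mul_le_mul_right delete_le (abs_pos.2 hxk))

lemma finite_support_of_isMinOn_add_mul_norm (hα : 0 < α)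
    (hg : Tendsto (fun k => g (lp.single 1 k 1)) cofinite (𝓝 0))
    (hmin : IsMinOn (fun z => g z + α * ‖z‖) univ x) : {k | x k ≠ 0}.Finite := by
  have eventually_small : ∀ᶠ k in cofinite, |g (lp.single 1 k 1)| < α := by
    simpa using hg.abs.eventually_lt_const (by simpa using hα)
  exact eventually_small.mono fun _ => apply_eq_zero_of_isMinOn_add_mul_norm hmin

end Sparsity

section Tikhonov

variable {Y : Type*} [NormedAddCommGroup Y] [NormedSpace ℝ Y] {A : ℓ¹ →L[ℝ] Y} {Φ : Y → ℝ}
  {α : ℝ}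

lemma WeakStarToWeakSeqContinuous.weakStarSeqLowerSemicontinuous_comp
    (hA : WeakStarToWeakSeqContinuous A) (hΦ : QuasiconvexOn ℝ univ Φ)
    (hΦc : LowerSemicontinuous Φ) : WeakStarSeqLowerSemicontinuous fun x => Φ (A x) := by
  intro x x₀ hx r hr
  have sublevel_convex : Convex ℝ (Φ ⁻¹' Iic r) := by
    simpa [preimage, Iic] using hΦ r
  obtain ⟨f, u, hfx₀, hf⟩ := geometric_hahn_banach_point_closed sublevel_convex
    (hΦc.isClosed_preimage r) (not_le.2 hr)
  filter_upwards [(hA x x₀ hx f).eventually_lt_const hfx₀] with n hn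
  exact not_le.1 fun hle => hn.not_gt (hf _ hle)

lemma WeakStarToWeakSeqContinuous.isWeakStarSeqClosed_fiber (hA : WeakStarToWeakSeqContinuous A)
    (y : Y) : IsWeakStarSeqClosed {x | A x = y} := by
  intro x x₀ hx hxy
  refine (SeparatingDual.eq_iff_forall_dual_eq (R := ℝ)).2 fun f => ?_
  have constant (n : ℕ) : f (A (x n)) = f y := congrArg f (hxy n)
  exact tendsto_nhds_unique (hA x x₀ hx f) (by simp only [constant, tendsto_const_nhds])

lemma WeakStarToWeakSeqContinuous.tendsto_apply_single (hA : WeakStarToWeakSeqContinuous A)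
    (ξ : Y →L[ℝ] ℝ) : Tendsto (fun k => ξ (A (lp.single 1 k 1))) atTop (𝓝 0) := by
  simpa using hA _ _ weakStarConvLp1_single ξ

lemma WeakStarToWeakSeqContinuous.exists_isMinOn_add_mul_norm
    (hA : WeakStarToWeakSeqContinuous A) (hΦ : QuasiconvexOn ℝ univ Φ)
    (hΦc : LowerSemicontinuous Φ) (hΦb : BddBelow (range Φ)) (hα : 0 < α) :
    ∃ x, IsMinOn (fun x => Φ (A x) + α * ‖x‖) univ x := by
  obtain ⟨m, hm⟩ := hΦb
  have m_le (x : ℓ¹) : m ≤ Φ (A x) := hm (mem_range_self _)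
  have bounded_below : BddBelow ((fun x : ℓ¹ => Φ (A x) + α * ‖x‖) '' univ) := by
    refine ⟨m, forall_mem_image.2 fun x _ => ?_⟩
    have : 0 ≤ α * ‖x‖ := by positivity
    linarith [m_le x]
  have coercive (r : ℝ) : Bornology.IsBounded {x ∈ univ | Φ (A x) + α * ‖x‖ ≤ r} := by
    refine isBounded_iff_forall_norm_le.2 ⟨(r - m) / α, fun x hx => ?_⟩
    rw [le_div_iff₀' hα]
    linarith [m_le x, hx.2]
  obtain ⟨x, -, hx⟩ := isWeakStarSeqClosed_univ.exists_isMinOn univ_nonempty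
    ((hA.weakStarSeqLowerSemicontinuous_comp hΦ hΦc).add
      (weakStarSeqLowerSemicontinuous_norm.const_mul hα))
    bounded_below coercive
  exact ⟨x, hx⟩

lemma WeakStarToWeakSeqContinuous.finite_support_of_isMinOn (hA : WeakStarToWeakSeqContinuous A)
    (hΦ : ConvexOn ℝ univ Φ) (hΦc : Continuous Φ) (hα : 0 < α) {x : ℓ¹}
    (hx : IsMinOn (fun x => Φ (A x) + α * ‖x‖) univ x) : {k | x k ≠ 0}.Finite := by
  obtain ⟨ξ, hξ⟩ := exists_dual_isMinOn_comp_add A.toLinearMap hΦ hΦc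
    (convexOn_univ_norm.smul hα.le) hx
  have single_tendsto := Nat.cofinite_eq_atTop ▸ hA.tendsto_apply_single ξ
  exact finite_support_of_isMinOn_add_mul_norm (g := (ξ.comp A).toLinearMap) hα single_tendsto hξ

lemma WeakStarToWeakSeqContinuous.exists_isMinOn_norm_fiber (hA : WeakStarToWeakSeqContinuous A)
    {y : Y} (hy : ∃ x, A x = y) : ∃ x, A x = y ∧ IsMinOn (fun x => ‖x‖) {x | A x = y} x := by
  refine (hA.isWeakStarSeqClosed_fiber y).exists_isMinOn hy weakStarSeqLowerSemicontinuous_norm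
    ⟨0, forall_mem_image.2 fun x _ => norm_nonneg x⟩ fun r => ?_
  exact isBounded_iff_forall_norm_le.2 ⟨r, fun x hx => hx.2⟩

end Tikhonov

lemma convexOn_norm_sub_rpow {Y : Type*} [SeminormedAddCommGroup Y] [NormedSpace ℝ Y] (y : Y)
    {p : ℝ} (hp : 1 ≤ p) : ConvexOn ℝ univ fun z => ‖z - y‖ ^ p := by
  refine ⟨convex_univ, fun u _ v _ a b ha hb hab => ?_⟩
  have norm_convex : ‖a • u + b • v - y‖ ≤ a * ‖u - y‖ + b * ‖v - y‖ := by
    simpa only [dist_eq_norm, smul_eq_mul] using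
      (convexOn_univ_dist y).2 (mem_univ u) (mem_univ v) ha hb hab
  calc ‖a • u + b • v - y‖ ^ p
      ≤ (a * ‖u - y‖ + b * ‖v - y‖) ^ p := by gcongr
    _ ≤ a * ‖u - y‖ ^ p + b * ‖v - y‖ ^ p :=
        (convexOn_rpow hp).2 (norm_nonneg _) (norm_nonneg _) ha hb hab

theorem tikhonov_existence_sparsity_normMinimizingSolutions_general
    {Y : Type*} [NormedAddCommGroup Y] [NormedSpace ℝ Y]
    (A : ℓ¹ →L[ℝ] Y) (hA : WeakStarToWeakSeqContinuous A)
    {Φ : Y → ℝ} (hΦ : ConvexOn ℝ univ Φ) (hΦc : Continuous Φ) (hΦb : BddBelow (range Φ))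
    {α : ℝ} (hα : 0 < α) (T : ℓ¹ → ℝ) (hT : ∀ x, T x = Φ (A x) + α * ‖x‖) :
    (∃ xstar, ∀ x, T xstar ≤ T x) ∧
    (∀ xstar, (∀ x, T xstar ≤ T x) → {k : ℕ | xstar k ≠ 0}.Finite) ∧
    (∀ y, (∃ x, A x = y) → ∃ xdag, A xdag = y ∧ ∀ x, A x = y → ‖xdag‖ ≤ ‖x‖) := by
  obtain rfl : T = fun x => Φ (A x) + α * ‖x‖ := funext hT
  simp only [← isMinOn_univ_iff (f := fun x => Φ (A x) + α * ‖x‖)]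
  exact ⟨hA.exists_isMinOn_add_mul_norm hΦ.quasiconvexOn hΦc.lowerSemicontinuous hΦb hα,
    fun _ => hA.finite_support_of_isMinOn hΦ hΦc hα,
    fun _ => hA.exists_isMinOn_norm_fiber⟩

/-- For a weak*-to-weak sequentially continuous bounded linear operator
`A : ℓ¹ → Y`, `y^δ ∈ Y`, `α > 0` and `p > 1`, the Tikhonov functional
`T(x) = ‖A x − y^δ‖^p + α‖x‖₁` attains its minimum, every minimizer is sparse, and whenever
`A x = y` is solvable it possesses a norm-minimizing solution. -/
theorem tikhonov_existence_sparsity_normMinimizingSolutions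
    {Y : Type*} [NormedAddCommGroup Y] [NormedSpace ℝ Y] [CompleteSpace Y]
    (A : lp (fun _ : ℕ => ℝ) 1 →L[ℝ] Y) (hw : WeakStarToWeakSeqContinuous A)
    (ydelta : Y) (α : ℝ) (hα : 0 < α) (p : ℝ) (hp : 1 < p)
    (T : lp (fun _ : ℕ => ℝ) 1 → ℝ)
    (hT : ∀ x, T x = ‖A x - ydelta‖ ^ p + α * ‖x‖) :
    (∃ xstar : lp (fun _ : ℕ => ℝ) 1, ∀ x, T xstar ≤ T x) ∧
    (∀ xstar : lp (fun _ : ℕ => ℝ) 1, (∀ x, T xstar ≤ T x) →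
      {k : ℕ | xstar k ≠ 0}.Finite) ∧
    (∀ y : Y, (∃ x : lp (fun _ : ℕ => ℝ) 1, A x = y) →
      ∃ xdag : lp (fun _ : ℕ => ℝ) 1, A xdag = y ∧
        ∀ x : lp (fun _ : ℕ => ℝ) 1, A x = y → ‖xdag‖ ≤ ‖x‖) := by
  have fidelity_continuous : Continuous fun z => ‖z - ydelta‖ ^ p :=
    (continuous_id.sub continuous_const).norm.rpow_const fun _ => .inr (by linarith)
  exact tikhonov_existence_sparsity_normMinimizingSolutions_general A hw
    (convexOn_norm_sub_rpow ydelta hp.le) fidelity_continuous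
    ⟨0, forall_mem_range.2 fun _ => by positivity⟩ hα T hT
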